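/- Assume gcd(n, q) = 1 and let X^n − 1 = p_1(X)p_2(X)⋯p_s(X) be the factorization into distinct monic irreducible polynomials in F_q[X]. Let e_1, …, e_s ∈ F_q[X] be the polynomials of degree < n determined by the congruences e_i ≡ δ_{ij} (mod p_j) for all 1 ≤ j ≤ s (the system of orthogonal idempotents of F_q[X]/(X^n − 1)). For α ∈ F_Q^× let Δ = {i : 1 ≤ i ≤ s, e_i(φ_q)(α) ≠ 0}. Then the conventional minimal polynomial of α is m_α = ∏_{i∈Δ} p_i(X), and α is k-normal for F_Q/F_q with k = n − Σ_{i∈Δ} deg p_i. -/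

import Mathlib

/-!
The linearized evaluation `lineval q f α` is `aeval φ f α`, where `φ` is the `q`-Frobenius viewed as
an `F_q`-linear endomorphism of `F_Q`. So `α` generates an `F_q[X]`-module killed by `Xⁿ - 1`, and
the minimal polynomial can be read off from the idempotents: `p_i` divides every annihilator of `α`
exactly when `e_i` does not kill `α`.

For the normality statement put `R = F_Q[X]/(Xⁿ - 1)`. In `R` one has `X g_α = g_{φ α}`, hence
`f g_α = g_{f(φ) α}` for every `f ∈ F_q[X]` (`dvd_map_mul_gpoly_sub`). As `deg g_β < n`, it follows
that `f g_α = 0` in `R` if and only if `f(φ) α = 0` (`dvd_map_mul_gpoly_iff`). The monic gcd of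
`g_α` and `Xⁿ - 1` is invariant under applying `φ` to coefficients, because this operation sends
`g_α` to `X g_α` modulo `Xⁿ - 1` and `X` is a unit in `R`; therefore the gcd comes from `F_q[X]`
(`exists_monic_map_associated_gcd`). Over `F_q` the previous equivalence says that the gcd is
`(Xⁿ - 1) / m_α`, which has degree `n - deg m_α`.
-/

open Polynomial

/-- Evaluation of the `q`-linearized polynomial associated to `f`:
if `f = Σ aᵢ Xⁱ` then `lineval q f α = Σ aᵢ α^(q^i)` (i.e. `f(φ_q)(α)`). -/
noncomputable def lineval {Fq FQ : Type*} [CommSemiring Fq] [CommSemiring FQ] [Algebra Fq FQ]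
    (q : ℕ) (f : Polynomial Fq) (α : FQ) : FQ :=
  f.sum fun i a => algebraMap Fq FQ a * α ^ q ^ i

/-- `g_α(X) = Σ_{i=0}^{n-1} α^(q^i) X^(n-1-i) ∈ F_Q[X]`. -/
noncomputable def gpoly {FQ : Type*} [CommSemiring FQ] (q n : ℕ) (α : FQ) : Polynomial FQ :=
  ∑ i ∈ Finset.range n, Polynomial.C (α ^ q ^ i) * Polynomial.X ^ (n - 1 - i)

/-- `α` is `k`-normal for `F_Q/F_q`: `deg gcd(g_α(X), Xⁿ - 1) = k` in `F_Q[X]`. -/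
def IsKNormal {FQ : Type*} [Field FQ] (q n k : ℕ) (α : FQ) : Prop :=
  letI := Classical.decEq (Polynomial FQ)
  (EuclideanDomain.gcd (gpoly q n α) (Polynomial.X ^ n - 1)).natDegree = k

/-- `m` is the conventional minimal polynomial of `α`: the monic generator of the ideal
`{f ∈ F_q[X] : f(φ_q)(α) = 0}`. -/
def IsMinPoly {Fq FQ : Type*} [CommSemiring Fq] [CommSemiring FQ] [Algebra Fq FQ]
    (q : ℕ) (α : FQ) (m : Polynomial Fq) : Prop :=
  m.Monic ∧ lineval q m α = 0 ∧ ∀ g : Polynomial Fq, lineval q g α = 0 → m ∣ g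

section Helpers

/-! ### Linearized evaluation as a module action -/

variable {Fq FQ : Type*} [Field Fq] [Fintype Fq] [Field FQ] [Algebra Fq FQ]

variable (Fq FQ) in
/-- The Frobenius `x ↦ x ^ #Fq` as an `Fq`-linear endomorphism of `FQ`. -/
noncomputable def frobEnd : Module.End Fq FQ :=
  (FiniteField.frobeniusAlgHom Fq FQ).toLinearMap

lemma frobEnd_apply (x : FQ) : frobEnd Fq FQ x = x ^ Fintype.card Fq := rfl

lemma frobEnd_pow_apply (i : ℕ) (x : FQ) :
    (frobEnd Fq FQ ^ i) x = x ^ Fintype.card Fq ^ i := by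
  induction i with
  | zero => simp
  | succ k ih => rw [pow_succ', Module.End.mul_apply, ih, frobEnd_apply, ← pow_mul, pow_succ]

lemma lineval_eq_aeval (f : Fq[X]) (α : FQ) :
    lineval (Fintype.card Fq) f α = aeval (frobEnd Fq FQ) f α := by
  rw [lineval, aeval_eq_sum_range, Polynomial.sum_over_range]
  · simp [LinearMap.sum_apply, frobEnd_pow_apply, Algebra.smul_def]
  · simp

lemma aeval_frobEnd_eq_zero_of_dvd {f g : Fq[X]} (h : f ∣ g) {α : FQ}
    (hf : aeval (frobEnd Fq FQ) f α = 0) : aeval (frobEnd Fq FQ) g α = 0 := by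
  obtain ⟨c, rfl⟩ := h
  rw [mul_comm, map_mul, Module.End.mul_apply, hf, map_zero]

/-! ### The polynomial `g_α` modulo `Xⁿ - 1` -/

lemma gpoly_add (n : ℕ) (α β : FQ) :
    gpoly (Fintype.card Fq) n (α + β) =
      gpoly (Fintype.card Fq) n α + gpoly (Fintype.card Fq) n β := by
  simp only [gpoly, ← frobEnd_pow_apply, map_add, add_mul, Finset.sum_add_distrib]

lemma gpoly_smul (n : ℕ) (a : Fq) (α : FQ) :
    gpoly (Fintype.card Fq) n (a • α) =
      C (algebraMap Fq FQ a) * gpoly (Fintype.card Fq) n α := by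
  simp only [gpoly, ← frobEnd_pow_apply, map_smul, Finset.mul_sum]
  simp only [Algebra.smul_def, C_mul, mul_assoc]

/-- Modulo `Xⁿ - 1`, multiplication by `X` turns `g_α` into `g_{φ α}`. -/
lemma gpoly_frobEnd (n : ℕ) (hn : 0 < n) (α : FQ) (hα : α ^ Fintype.card Fq ^ n = α) :
    gpoly (Fintype.card Fq) n (frobEnd Fq FQ α) =
      X * gpoly (Fintype.card Fq) n α - C α * (X ^ n - 1) := by
  obtain ⟨k, rfl⟩ : ∃ k, n = k + 1 := ⟨n - 1, by omega⟩
  have h1 : gpoly (Fintype.card Fq) (k + 1) (frobEnd Fq FQ α) =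
      ∑ i ∈ Finset.range (k + 1), C (α ^ Fintype.card Fq ^ (i + 1)) * X ^ (k - i) := by
    refine Finset.sum_congr rfl fun i _ => ?_
    rw [frobEnd_apply, ← pow_mul, ← pow_succ']
    simp
  have h2 : X * gpoly (Fintype.card Fq) (k + 1) α =
      ∑ i ∈ Finset.range (k + 1), C (α ^ Fintype.card Fq ^ i) * X ^ (k + 1 - i) := by
    rw [gpoly, Finset.mul_sum]
    refine Finset.sum_congr rfl fun i hi => ?_
    have : k + 1 - i = k + 1 - 1 - i + 1 := by have := Finset.mem_range.1 hi; omega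
    rw [this, pow_succ]
    ring
  rw [h1, h2, Finset.sum_range_succ, Finset.sum_range_succ' _ k, hα]
  simp
  ring

/-- Modulo `Xⁿ - 1`, multiplication by `f ∈ Fq[X]` turns `g_α` into `g_{f(φ) α}`. -/
lemma dvd_map_mul_gpoly_sub (n : ℕ) (hn : 0 < n) (hQ : ∀ x : FQ, x ^ Fintype.card Fq ^ n = x)
    (f : Fq[X]) (α : FQ) :
    (X ^ n - 1 : FQ[X]) ∣ f.map (algebraMap Fq FQ) * gpoly (Fintype.card Fq) n α -
      gpoly (Fintype.card Fq) n (aeval (frobEnd Fq FQ) f α) := by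
  induction f using Polynomial.induction_on generalizing α with
  | C a => simp [gpoly_smul, aeval_C, Module.algebraMap_end_apply]
  | add f g hf hg =>
    convert dvd_add (hf α) (hg α) using 1
    rw [map_add, LinearMap.add_apply, gpoly_add, Polynomial.map_add]
    ring
  | monomial k a ih =>
    have h := ih (frobEnd Fq FQ α)
    rw [gpoly_frobEnd n hn α (hQ α)] at h
    have e1 : aeval (frobEnd Fq FQ) (C a * X ^ (k + 1)) α =
        aeval (frobEnd Fq FQ) (C a * X ^ k) (frobEnd Fq FQ α) := by
      rw [pow_succ, ← mul_assoc, map_mul, Module.End.mul_apply, aeval_X]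
    rw [e1]
    convert dvd_add h (Dvd.intro_left
      ((C a * X ^ k : Fq[X]).map (algebraMap Fq FQ) * C α) rfl) using 1
    simp only [Polynomial.map_mul, Polynomial.map_pow, map_X, map_C]
    ring

lemma degree_gpoly_lt (q n : ℕ) (hn : 0 < n) (α : FQ) : (gpoly q n α).degree < n := by
  refine (degree_sum_le _ _).trans_lt ((Finset.sup_lt_iff (by simp)).2 fun i _ => ?_)
  exact (degree_C_mul_X_pow_le _ _).trans_lt (by exact_mod_cast (by omega))

lemma eq_zero_of_gpoly_eq_zero (q n : ℕ) (hn : 0 < n) (α : FQ) (h : gpoly q n α = 0) :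
    α = 0 := by
  have h1 : (gpoly q n α).coeff (n - 1) = α := by
    rw [gpoly, finsetSum_coeff, Finset.sum_eq_single 0]
    · simp
    · intro i hi h0
      have := Finset.mem_range.1 hi
      rw [coeff_C_mul_X_pow, if_neg (by omega)]
    · simp [hn.ne']
  rw [← h1, h, coeff_zero]

/-- The annihilator of `g_α` modulo `Xⁿ - 1` meets `Fq[X]` in the annihilator of `α` under
linearized evaluation. -/
lemma dvd_map_mul_gpoly_iff (n : ℕ) (hn : 0 < n) (hQ : ∀ x : FQ, x ^ Fintype.card Fq ^ n = x)
    (f : Fq[X]) (α : FQ) :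
    (X ^ n - 1 : FQ[X]) ∣ f.map (algebraMap Fq FQ) * gpoly (Fintype.card Fq) n α ↔
      aeval (frobEnd Fq FQ) f α = 0 := by
  have h := dvd_map_mul_gpoly_sub n hn hQ f α
  constructor
  · intro hd
    refine eq_zero_of_gpoly_eq_zero (Fintype.card Fq) n hn _ ?_
    refine eq_zero_of_dvd_of_degree_lt ((dvd_sub_right hd).1 h) ?_
    have : (X ^ n - 1 : FQ[X]).degree = n := by simpa using degree_X_pow_sub_C hn (1 : FQ)
    rw [this]
    exact degree_gpoly_lt _ n hn _
  · intro h0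
    simpa [h0, gpoly] using h

/-! ### Rationality and degree of the gcd -/

/-- The fixed elements of Frobenius are those of the base field. -/
lemma mem_range_of_pow_card_eq [Fintype FQ] (x : FQ) (hx : x ^ Fintype.card Fq = x) :
    x ∈ Set.range (algebraMap Fq FQ) := by
  rw [IsGalois.mem_range_algebraMap_iff_fixed]
  intro f
  obtain ⟨i, rfl⟩ := (FiniteField.bijective_frobeniusAlgEquivOfAlgebraic_pow Fq FQ).2 f
  rw [AlgEquiv.coe_pow]
  exact Function.iterate_fixed hx i

open scoped Classical in
/-- The monic gcd of `g_α` and `Xⁿ - 1` has coefficients in `Fq`. -/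
lemma exists_monic_map_associated_gcd [Fintype FQ] (n : ℕ) (hn : 0 < n)
    (hQ : ∀ x : FQ, x ^ Fintype.card Fq ^ n = x) (α : FQ) :
    ∃ D : Fq[X], D.Monic ∧ Associated (D.map (algebraMap Fq FQ))
      (EuclideanDomain.gcd (gpoly (Fintype.card Fq) n α) (X ^ n - 1)) := by
  set G := EuclideanDomain.gcd (gpoly (Fintype.card Fq) n α) (X ^ n - 1) with hG
  have hX : (X ^ n - 1 : FQ[X]) ≠ 0 := (monic_X_pow_sub_C (1 : FQ) hn.ne').ne_zero
  have hG0 : G ≠ 0 := fun h => hX (EuclideanDomain.gcd_eq_zero_iff.1 h).2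
  set H := G * C (G.leadingCoeff)⁻¹ with hH
  have hHm : H.Monic := monic_mul_leadingCoeff_inv hG0
  have hHG : Associated H G := by
    refine associated_mul_unit_left _ _ (isUnit_C.2 ?_)
    exact (inv_ne_zero (leadingCoeff_ne_zero.2 hG0)).isUnit
  let σ : FQ →+* FQ := (FiniteField.frobeniusAlgHom Fq FQ : FQ →+* FQ)
  have hσ : ∀ x, σ x = x ^ Fintype.card Fq := fun _ => rfl
  have hσg : (gpoly (Fintype.card Fq) n α).map σ =
      gpoly (Fintype.card Fq) n (frobEnd Fq FQ α) := by
    simp only [gpoly, Polynomial.map_sum, Polynomial.map_mul, Polynomial.map_pow, map_C, map_X,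
      hσ, frobEnd_apply]
    refine Finset.sum_congr rfl fun i _ => ?_
    rw [pow_right_comm]
  have d1 : H.map σ ∣ gpoly (Fintype.card Fq) n (frobEnd Fq FQ α) := by
    rw [← hσg]
    exact Polynomial.map_dvd σ (hHG.dvd.trans (EuclideanDomain.gcd_dvd_left _ _))
  have d2 : H.map σ ∣ X ^ n - 1 := by
    have := Polynomial.map_dvd σ (hHG.dvd.trans (EuclideanDomain.gcd_dvd_right _ _))
    simpa using this
  have d3 : H.map σ ∣ X * gpoly (Fintype.card Fq) n α := by
    rw [gpoly_frobEnd n hn α (hQ α)] at d1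
    exact (dvd_sub_left (d2.mul_left _)).1 d1
  have hcop : IsCoprime (H.map σ) X := by
    refine IsCoprime.of_isCoprime_of_dvd_left ?_ d2
    refine ⟨-1, X ^ (n - 1), ?_⟩
    rw [← pow_succ, Nat.sub_add_cancel hn]
    ring
  have d4 : H.map σ ∣ H :=
    (EuclideanDomain.dvd_gcd (hcop.dvd_of_dvd_mul_left d3) d2).trans hHG.symm.dvd
  have heq : H.map σ = H :=
    (eq_of_dvd_of_natDegree_le_of_leadingCoeff d4 (by simp)
      (by rw [(hHm.map σ).leadingCoeff, hHm.leadingCoeff]))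
  have hlift : H ∈ lifts (algebraMap Fq FQ) := by
    rw [lifts_iff_coeff_lifts]
    intro i
    refine mem_range_of_pow_card_eq _ ?_
    rw [← hσ, ← coeff_map, heq]
  obtain ⟨D, hD, -, hDm⟩ := lifts_and_natDegree_eq_and_monic hlift hHm
  exact ⟨D, hDm, hD ▸ hHG⟩

/-- If `m` generates the annihilator of `α`, then `α` is `(n - deg m)`-normal. -/
lemma isKNormal_of_generates_annihilator [Fintype FQ] (n : ℕ) (hn : 0 < n)
    (hQ : ∀ x : FQ, x ^ Fintype.card Fq ^ n = x) (α : FQ) (m : Fq[X])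
    (hm0 : aeval (frobEnd Fq FQ) m α = 0)
    (hm : ∀ g : Fq[X], aeval (frobEnd Fq FQ) g α = 0 → m ∣ g) :
    IsKNormal (Fintype.card Fq) n (n - m.natDegree) α := by
  classical
  obtain ⟨D, hDm, hDG⟩ := exists_monic_map_associated_gcd (Fq := Fq) n hn hQ α
  have hXm : (X ^ n - 1 : Fq[X]).Monic := by simpa using monic_X_pow_sub_C (1 : Fq) hn.ne'
  have hXd : (X ^ n - 1 : Fq[X]).natDegree = n := by
    simpa using natDegree_X_pow_sub_C (n := n) (r := (1 : Fq))
  have hmX : m ∣ X ^ n - 1 := by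
    refine hm _ ?_
    simp [frobEnd_pow_apply, hQ]
  have hDX : D ∣ X ^ n - 1 := by
    rw [← map_dvd_map' (algebraMap Fq FQ)]
    simpa using hDG.dvd.trans (EuclideanDomain.gcd_dvd_right _ _)
  obtain ⟨h, hh⟩ := hmX
  obtain ⟨r, hr⟩ := hDX
  have hne : (X ^ n - 1 : Fq[X]) ≠ 0 := hXm.ne_zero
  have hmne : m ≠ 0 := by rintro rfl; simp [hh] at hne
  have hhne : h ≠ 0 := by rintro rfl; simp [hh] at hne
  have hrne : r ≠ 0 := by rintro rfl; simp [hr] at hne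
  have mapX : (X ^ n - 1 : FQ[X]) = (X ^ n - 1 : Fq[X]).map (algebraMap Fq FQ) := by simp
  -- `(Xⁿ - 1) / m` divides the gcd.
  have hhD : h ∣ D := by
    rw [← map_dvd_map' (algebraMap Fq FQ)]
    refine (EuclideanDomain.dvd_gcd ?_ ?_).trans hDG.symm.dvd
    · have := (dvd_map_mul_gpoly_iff n hn hQ m α).2 hm0
      rw [mapX, hh, Polynomial.map_mul] at this
      exact (mul_dvd_mul_iff_left (Polynomial.map_ne_zero hmne)).1 this
    · rw [mapX, hh]
      exact Polynomial.map_dvd _ (Dvd.intro_left m rfl)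
  -- `(Xⁿ - 1) / gcd` kills `α`, hence is a multiple of `m`.
  have hmr : m ∣ r := by
    refine hm r ((dvd_map_mul_gpoly_iff n hn hQ r α).1 ?_)
    rw [mapX, hr, Polynomial.map_mul, mul_comm]
    exact mul_dvd_mul_left _ (hDG.dvd.trans (EuclideanDomain.gcd_dvd_left _ _))
  have e1 := natDegree_mul hmne hhne
  have e2 := natDegree_mul hDm.ne_zero hrne
  rw [← hh, hXd] at e1
  rw [← hr, hXd] at e2
  have l1 := natDegree_le_of_dvd hhD hDm.ne_zero
  have l2 := natDegree_le_of_dvd hmr hrne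
  have e3 := natDegree_eq_of_degree_eq (degree_eq_degree_of_associated hDG)
  rw [natDegree_map] at e3
  unfold IsKNormal
  convert! e3.symm.trans (by omega : D.natDegree = n - m.natDegree)

end Helpers

/-! ### Idempotents and the minimal polynomial -/

open scoped Classical in
theorem stmt_4 (p mm n q s : ℕ) (hp : p.Prime) (hmm : 0 < mm) (hq : q = p ^ mm) (hn : 0 < n)
    {Fq FQ : Type*} [Field Fq] [Fintype Fq] [Field FQ] [Fintype FQ] [Algebra Fq FQ]
    (hcard : Fintype.card Fq = q) (hcardQ : Fintype.card FQ = q ^ n)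
    (hgcd : Nat.gcd n q = 1)
    (P : Fin s → Polynomial Fq) (hmono : ∀ i, (P i).Monic) (hirr : ∀ i, Irreducible (P i))
    (hdist : Function.Injective P)
    (hprod : ∏ i, P i = Polynomial.X ^ n - 1)
    (e : Fin s → Polynomial Fq) (hdeg : ∀ i, (e i).degree < n)
    (hcong : ∀ i j, e i %ₘ P j = if i = j then 1 else 0)
    (α : FQ) (hα : α ≠ 0) :
    IsMinPoly q α
      (∏ i ∈ Finset.univ.filter (fun i => lineval q (e i) α ≠ 0), P i) ∧
    IsKNormal q n
      (n - ∑ i ∈ Finset.univ.filter (fun i => lineval q (e i) α ≠ 0), (P i).natDegree) α := by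
  clear hq
  subst hcard
  have hQ : ∀ x : FQ, x ^ Fintype.card Fq ^ n = x := fun x => by
    rw [← hcardQ, FiniteField.pow_card]
  simp only [lineval_eq_aeval, IsMinPoly]
  set Δ := Finset.univ.filter (fun i => aeval (frobEnd Fq FQ) (e i) α ≠ 0) with hΔ
  have hcop : ∀ i j, i ≠ j → IsCoprime (P i) (P j) := fun i j hij =>
    ((hirr i).coprime_iff_not_dvd).2 fun hd => hij <| hdist <|
      eq_of_monic_of_associated (hmono i) (hmono j) ((hirr i).associated_of_dvd (hirr j) hd)
  have hall : ∀ f : Fq[X], (∀ i, P i ∣ f) → X ^ n - 1 ∣ f := fun f hf => by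
    rw [← hprod]
    exact Fintype.prod_dvd_of_coprime (fun i j hij => hcop i j hij) hf
  have hkill : ∀ f : Fq[X], (∀ i, P i ∣ f) → aeval (frobEnd Fq FQ) f α = 0 := fun f hf =>
    aeval_frobEnd_eq_zero_of_dvd (hall f hf) (by simp [frobEnd_pow_apply, hQ])
  have hPe : ∀ i j, i ≠ j → P j ∣ e i := fun i j hij => by
    rw [← modByMonic_eq_zero_iff_dvd (hmono j), hcong, if_neg hij]
  have hPe1 : ∀ i, P i ∣ e i - 1 := fun i => by
    have h := modByMonic_add_div (e i) (P i)
    rw [hcong, if_pos rfl] at h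
    exact ⟨e i /ₘ P i, by linear_combination -h⟩
  have hPPe : ∀ i, aeval (frobEnd Fq FQ) (P i * e i) α = 0 := fun i => hkill _ fun j => by
    by_cases hij : i = j
    · exact hij ▸ dvd_mul_right _ _
    · exact (hPe i j hij).mul_left _
  have hsum : ∀ j, P j ∣ (∑ i, e i) - 1 := fun j => by
    rw [← Finset.add_sum_erase _ _ (Finset.mem_univ j), add_sub_right_comm]
    exact dvd_add (hPe1 j) (Finset.dvd_sum fun i hi => hPe i j (Finset.ne_of_mem_erase hi))
  have hm0 : aeval (frobEnd Fq FQ) (∏ i ∈ Δ, P i) α = 0 := by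
    -- `m = ∑ m eᵢ` modulo `Xⁿ - 1`, and each term kills `α`.
    have hα' : α = ∑ i, aeval (frobEnd Fq FQ) (e i) α := by
      have := hkill _ hsum
      rw [map_sub, map_one, map_sum, LinearMap.sub_apply, LinearMap.sum_apply,
        Module.End.one_apply, sub_eq_zero] at this
      exact this.symm
    conv_lhs => rw [hα', map_sum]
    refine Finset.sum_eq_zero fun i _ => ?_
    by_cases hi : i ∈ Δ
    · rw [← Module.End.mul_apply, ← map_mul]
      exact aeval_frobEnd_eq_zero_of_dvd
        (mul_dvd_mul_right (Finset.dvd_prod_of_mem P hi) _) (hPPe i)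
    · have : aeval (frobEnd Fq FQ) (e i) α = 0 := by simpa [hΔ] using hi
      rw [this, map_zero]
  have hmin : ∀ g : Fq[X], aeval (frobEnd Fq FQ) g α = 0 → ∏ i ∈ Δ, P i ∣ g := by
    intro g hg
    refine Finset.prod_dvd_of_coprime (fun i _ j _ hij => hcop i j hij) fun i hi => ?_
    by_contra hnd
    -- A Bézout relation between `P i` and `g` would make `e i` kill `α`.
    obtain ⟨u, v, huv⟩ := ((hirr i).coprime_iff_not_dvd).2 hnd
    have hi' : aeval (frobEnd Fq FQ) (e i) α ≠ 0 := by simpa [hΔ] using hi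
    apply hi'
    have : e i = u * (P i * e i) + (v * e i) * g := by linear_combination (-(e i)) * huv
    rw [this, map_add, LinearMap.add_apply,
      aeval_frobEnd_eq_zero_of_dvd (dvd_mul_left _ _) (hPPe i),
      aeval_frobEnd_eq_zero_of_dvd (dvd_mul_left _ _) hg, add_zero]
  refine ⟨⟨monic_prod_of_monic _ _ fun i _ => hmono i, hm0, hmin⟩, ?_⟩
  rw [← natDegree_prod_of_monic _ _ fun i _ => hmono i]
  exact isKNormal_of_generates_annihilator n hn hQ α _ hm0 hmin
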